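/- Let A be a unital alternative ring admitting a derivation with invertible values d. If x ∈ A satisfies d(x) = 0, then either x = 0 or x is invertible. -/

import Mathlib

/-- An element of a unital (not necessarily associative) ring is invertible if it has
a two-sided inverse. -/
def IsInv {A : Type*} [NonAssocRing A] (a : A) : Prop :=
  ∃ b : A, a * b = 1 ∧ b * a = 1

/-!
If `d x = 0` then `d (x * y) = x * d y`, so choosing `y` with `d y` invertible makes `x * d y`
zero or invertible, and `x` is recovered as `(x * d y) * (d y)⁻¹`. Cancelling `d y` on the right and
multiplying invertible elements are both legitimate in an alternative ring, by the Moufang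
identities.
-/

/-- The left and right alternative laws, making a nonassociative ring an alternative ring. This is
a mixin on a bare multiplication, so that it applies to unital and non-unital rings alike. -/
class IsAlternative (A : Type*) [Mul A] : Prop where
  left_alternative : ∀ x y : A, (x * x) * y = x * (x * y)
  right_alternative : ∀ x y : A, (x * y) * y = x * (y * y)

namespace IsAlternative

section NonUnital

variable {A : Type*} [NonUnitalNonAssocRing A] [IsAlternative A]

theorem associator_self_left (x y : A) : associator x x y = 0 :=
  sub_eq_zero.mpr (left_alternative x y)

theorem associator_self_right (x y : A) : associator x y y = 0 :=
  sub_eq_zero.mpr (right_alternative x y)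

theorem associator_swap_left (x y z : A) : associator x y z = -associator y x z := by
  rw [eq_neg_iff_add_eq_zero]
  calc associator x y z + associator y x z
      = associator (x + y) (x + y) z - associator x x z - associator y y z := by
        simp only [associator_apply, add_mul, mul_add]; abel
    _ = 0 := by simp only [associator_self_left, sub_zero]

theorem associator_swap_right (x y z : A) : associator x y z = -associator x z y := by
  rw [eq_neg_iff_add_eq_zero]
  calc associator x y z + associator x z y
      = associator x (y + z) (y + z) - associator x y y - associator x z z := by
        simp only [associator_apply, add_mul, mul_add]; abel
    _ = 0 := by simp only [associator_self_right, sub_zero]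

theorem associator_rotate (x y z : A) : associator x y z = associator y z x := by
  rw [associator_swap_left, associator_swap_right, neg_neg]

theorem flexible (x y : A) : (x * y) * x = x * (y * x) := by
  rw [← sub_eq_zero, ← associator_apply, associator_rotate, associator_rotate, associator_self_left]

theorem associator_self_mul (x y z : A) :
    associator x (x * y) z = associator (x * x) y z - x * associator x y z := by
  have cocycle := associator_cocycle x x y z
  rw [associator_self_left, associator_self_left, zero_mul, sub_zero, add_zero] at cocycle
  rw [eq_neg_of_add_eq_zero_right cocycle, neg_sub]

theorem left_moufang (x y z : A) : ((x * y) * x) * z = x * (y * (x * z)) := by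
  rw [← sub_eq_zero]
  calc ((x * y) * x) * z - x * (y * (x * z))
      = associator (x * y) x z + associator x y (x * z) := by
        simp only [associator_apply]; abel
    _ = -(associator x (x * y) z + associator x (x * z) y) := by
        rw [associator_swap_left (x * y), associator_swap_right x y, neg_add]
    _ = 0 := by
        rw [associator_self_mul, associator_self_mul, associator_swap_right (x * x) y,
          associator_swap_right x y, mul_neg]
        abel

theorem middle_moufang (x y z : A) : (x * y) * (z * x) = (x * (y * z)) * x := by
  have associator_eq : associator x y (z * x) = x * associator y z x := by
    calc associator x y (z * x)
        = x * ((z * x) * y) - (x * (z * x)) * y := by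
          rw [associator_swap_right, associator_apply, neg_sub]
      _ = x * associator z x y := by
          rw [← flexible, left_moufang, associator_apply, mul_sub]
      _ = x * associator y z x := by rw [associator_rotate y z x]
  calc (x * y) * (z * x)
      = x * (y * (z * x)) + associator x y (z * x) := by rw [associator_apply, add_sub_cancel]
    _ = x * ((y * z) * x) := by rw [associator_eq, ← mul_add, associator_apply, add_sub_cancel]
    _ = (x * (y * z)) * x := (flexible x (y * z)).symm

end NonUnital

section Unital

variable {A : Type*} [NonAssocRing A] [IsAlternative A]

theorem mul_right_injective_of_invertible (u : A) [Invertible u] :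
    Function.Injective (u * ·) := by
  have left_inverse : Function.LeftInverse (fun z => u * ((⅟u * ⅟u) * z)) (u * ·) := fun z =>
    calc u * ((⅟u * ⅟u) * (u * z))
        = ((u * (⅟u * ⅟u)) * u) * z := (left_moufang u (⅟u * ⅟u) z).symm
      _ = z := by
        rw [← right_alternative, mul_invOf_self, one_mul, invOf_mul_self, one_mul]
  exact left_inverse.injective

theorem invOf_mul_cancel_left (u z : A) [Invertible u] : ⅟u * (u * z) = z := by
  apply mul_right_injective_of_invertible u
  calc u * (⅟u * (u * z)) = ((u * ⅟u) * u) * z := (left_moufang u ⅟u z).symm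
    _ = u * z := by rw [mul_invOf_self, one_mul]

theorem mul_invOf_cancel_left (u z : A) [Invertible u] : u * (⅟u * z) = z :=
  letI := invertibleInvOf (a := u)
  invOf_mul_cancel_left ⅟u z

theorem mul_invOf_cancel_right (z u : A) [Invertible u] : (z * u) * ⅟u = z := by
  have associator_eq_zero : associator z u ⅟u = 0 := by
    rw [associator_rotate, associator_apply, mul_invOf_self, one_mul, mul_invOf_cancel_left,
      sub_self]
  calc (z * u) * ⅟u = z * (u * ⅟u) := sub_eq_zero.mp associator_eq_zero
    _ = z := by rw [mul_invOf_self, mul_one]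

theorem invOf_mul_cancel_right (z u : A) [Invertible u] : (z * ⅟u) * u = z :=
  letI := invertibleInvOf (a := u)
  mul_invOf_cancel_right z ⅟u

theorem mul_mul_invOf_mul_invOf (a b : A) [Invertible a] [Invertible b] :
    (a * b) * (⅟b * ⅟a) = 1 :=
  -- The right factor is rewritten to end in `a`, as the middle Moufang identity requires.
  calc (a * b) * (⅟b * ⅟a)
      = (a * b) * ((⅟b * (⅟a * ⅟a)) * a) := by rw [← right_alternative, invOf_mul_cancel_right]
    _ = (a * (b * (⅟b * (⅟a * ⅟a)))) * a := middle_moufang a b _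
    _ = 1 := by rw [mul_invOf_cancel_left, mul_invOf_cancel_left, invOf_mul_self]

end Unital

end IsAlternative

theorem isInv_iff_nonempty_invertible {A : Type*} [NonAssocRing A] {a : A} :
    IsInv a ↔ Nonempty (Invertible a) :=
  ⟨fun ⟨b, hab, hba⟩ => ⟨⟨b, hba, hab⟩⟩, fun ⟨_⟩ => ⟨⅟a, mul_invOf_self a, invOf_mul_self a⟩⟩

namespace IsInv

variable {A : Type*} [NonAssocRing A] [IsAlternative A]

theorem mul {a b : A} (ha : IsInv a) (hb : IsInv b) : IsInv (a * b) := by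
  obtain ⟨_⟩ := isInv_iff_nonempty_invertible.mp ha
  obtain ⟨_⟩ := isInv_iff_nonempty_invertible.mp hb
  let := invertibleInvOf (a := a)
  let := invertibleInvOf (a := b)
  exact ⟨⅟b * ⅟a, IsAlternative.mul_mul_invOf_mul_invOf a b,
    IsAlternative.mul_mul_invOf_mul_invOf ⅟b ⅟a⟩

theorem of_mul_right {x u : A} (hu : IsInv u) (hxu : IsInv (x * u)) : IsInv x := by
  obtain ⟨_⟩ := isInv_iff_nonempty_invertible.mp hu
  have hinv : IsInv ⅟u := isInv_iff_nonempty_invertible.mpr ⟨invertibleInvOf⟩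
  simpa only [IsAlternative.mul_invOf_cancel_right] using hxu.mul hinv

theorem eq_zero_of_mul_right_eq_zero {x u : A} (hu : IsInv u) (hxu : x * u = 0) : x = 0 := by
  obtain ⟨_⟩ := isInv_iff_nonempty_invertible.mp hu
  rw [← IsAlternative.mul_invOf_cancel_right x u, hxu, zero_mul]

end IsInv

theorem kernel_element_zero_or_invertible_general {A : Type*} [NonAssocRing A] [IsAlternative A]
    (d : A → A)
    (hmul : ∀ x y : A, d (x * y) = d x * y + x * d y)
    (hnz : ∃ x : A, d x ≠ 0)
    (hval : ∀ x : A, d x = 0 ∨ IsInv (d x))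
    (x : A) (hx : d x = 0) :
    x = 0 ∨ IsInv x := by
  obtain ⟨y, hy⟩ := hnz
  have hu : IsInv (d y) := (hval y).resolve_left hy
  have hxy : d (x * y) = x * d y := by rw [hmul, hx, zero_mul, zero_add]
  have hxu : x * d y = 0 ∨ IsInv (x * d y) := hxy ▸ hval (x * y)
  exact hxu.imp hu.eq_zero_of_mul_right_eq_zero hu.of_mul_right

/-- If `A` is a unital alternative ring admitting a derivation with invertible values `d`,
and `d x = 0`, then `x = 0` or `x` is invertible. -/
theorem kernel_element_zero_or_invertible {A : Type*} [NonAssocRing A]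
    (alt1 : ∀ x y : A, (x * x) * y = x * (x * y))
    (alt2 : ∀ x y : A, (x * y) * y = x * (y * y))
    (d : A → A)
    (hadd : ∀ x y : A, d (x + y) = d x + d y)
    (hmul : ∀ x y : A, d (x * y) = d x * y + x * d y)
    (hnz : ∃ x : A, d x ≠ 0)
    (hval : ∀ x : A, d x = 0 ∨ IsInv (d x))
    (x : A) (hx : d x = 0) :
    x = 0 ∨ IsInv x := by
  have : IsAlternative A := ⟨alt1, alt2⟩
  exact kernel_element_zero_or_invertible_general d hmul hnz hval x hx
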